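/- For the probability density μ(x) = 1/(π(1+|x|²)²) on ℝ² one has ∫_{ℝ²} μ log μ dx = −2 − log π and ∬_{ℝ²×ℝ²} μ(x) μ(y) log|x−y| dx dy = 1/2; in particular μ realizes the equality case of the logarithmic Hardy–Littlewood–Sobolev inequality: ∫_{ℝ²} μ log μ dx + 2 ∬_{ℝ²×ℝ²} μ(x) μ(y) log|x−y| dx dy + 1 + log π = 0. -/

import Mathlib

open MeasureTheory Real Filter

noncomputable section

/-- The Euclidean plane ℝ². -/
abbrev E2 := EuclideanSpace ℝ (Fin 2)

/-- The probability density μ(x) = 1/(π (1+|x|²)²) on ℝ². -/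
def mu2 (x : E2) : ℝ := 1 / (π * (1 + ‖x‖ ^ 2) ^ 2)

/-- The external potential V(x) = −log μ(x) = 2 log(1+|x|²) + log π. -/
def Vpot (x : E2) : ℝ := 2 * Real.log (1 + ‖x‖ ^ 2) + Real.log π

/-- A function f on ℝ² is admissible if it is measurable, nonnegative a.e., integrable,
and ∫ f |log f|, ∫ V f and ∬ f(x) f(y) |log|x−y|| are all finite. -/
def Admissible (f : E2 → ℝ) : Prop :=
  Measurable f ∧ (∀ᵐ x : E2, 0 ≤ f x) ∧ Integrable f ∧
  Integrable (fun x => f x * |Real.log (f x)|) ∧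
  Integrable (fun x => Vpot x * f x) ∧
  Integrable (fun p : E2 × E2 => f p.1 * f p.2 * |Real.log ‖p.1 - p.2‖|)

/-- The repulsive free energy F⁺_β. -/
def Fplus (β : ℝ) (f : E2 → ℝ) : ℝ :=
  (∫ x, f x * Real.log (f x)) + β * (∫ x, Vpot x * f x)
    - (1 / (4 * π)) * ∫ p : E2 × E2, f p.1 * f p.2 * Real.log ‖p.1 - p.2‖

/-- The attractive free energy F⁻_β. -/
def Fminus (β : ℝ) (f : E2 → ℝ) : ℝ :=
  (∫ x, f x * Real.log (f x)) + β * (∫ x, Vpot x * f x)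
    + (1 / (4 * π)) * ∫ p : E2 × E2, f p.1 * f p.2 * Real.log ‖p.1 - p.2‖

section RadialIntegrals

open Set Topology

lemma integral_radial_E2 (f : ℝ → ℝ) :
    ∫ x : E2, f ‖x‖ = 2 * π * ∫ r in Ioi (0 : ℝ), r * f r := by
  rw [integral_fun_norm_addHaar volume f]
  simp [Measure.real, EuclideanSpace.volume_ball_fin_two, pi_nonneg, mul_assoc]

lemma integrable_radial_E2_iff (f : ℝ → ℝ) :
    Integrable (fun x : E2 => f ‖x‖) ↔ IntegrableOn (fun r => r * f r) (Ioi (0 : ℝ)) := by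
  rw [integrable_fun_norm_addHaar volume (f := f)]
  simp

lemma integral_mu2_mul_radial (g : ℝ → ℝ) :
    ∫ x : E2, mu2 x * g ‖x‖ = ∫ r in Ioi (0 : ℝ), 2 * r / (1 + r ^ 2) ^ 2 * g r := by
  have := integral_radial_E2 (fun r => 1 / (π * (1 + r ^ 2) ^ 2) * g r)
  unfold mu2
  rw [this, ← integral_const_mul]
  congr 1
  ext r
  have : 1 + r ^ 2 ≠ 0 := by positivity
  field_simp

lemma integrable_mu2_mul_radial {g : ℝ → ℝ}
    (hg : IntegrableOn (fun r => 2 * r / (1 + r ^ 2) ^ 2 * g r) (Ioi (0 : ℝ))) :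
    Integrable (fun x : E2 => mu2 x * g ‖x‖) := by
  unfold mu2
  rw [integrable_radial_E2_iff (fun r => 1 / (π * (1 + r ^ 2) ^ 2) * g r)]
  refine IntegrableOn.congr_fun (hg.const_mul (2 * π)⁻¹) (fun r _ => ?_) measurableSet_Ioi
  have : 1 + r ^ 2 ≠ 0 := by positivity
  field_simp

lemma tendsto_one_add_sq_atTop : Tendsto (fun r : ℝ => 1 + r ^ 2) atTop atTop :=
  tendsto_atTop_add_const_left _ _ (tendsto_pow_atTop two_ne_zero)

lemma hasDerivAt_one_add_sq (r : ℝ) : HasDerivAt (fun r : ℝ => 1 + r ^ 2) (2 * r) r := by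
  simpa using (hasDerivAt_pow 2 r).const_add 1

lemma hasDerivAt_mass_primitive (r : ℝ) :
    HasDerivAt (fun r : ℝ => -(1 + r ^ 2)⁻¹) (2 * r / (1 + r ^ 2) ^ 2 * 1) r := by
  have h : 1 + r ^ 2 ≠ 0 := by positivity
  convert! ((hasDerivAt_one_add_sq r).inv h).neg using 1
  field_simp

lemma tendsto_mass_primitive : Tendsto (fun r : ℝ => -(1 + r ^ 2)⁻¹) atTop (𝓝 0) := by
  simpa using (tendsto_inv_atTop_zero.comp tendsto_one_add_sq_atTop).neg

lemma hasDerivAt_log_primitive (r : ℝ) :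
    HasDerivAt (fun r : ℝ => -((log (1 + r ^ 2) + 1) * (1 + r ^ 2)⁻¹))
      (2 * r / (1 + r ^ 2) ^ 2 * log (1 + r ^ 2)) r := by
  have h : 1 + r ^ 2 ≠ 0 := by positivity
  have h1 := hasDerivAt_one_add_sq r
  convert! (((h1.log h).add_const 1).mul (h1.inv h)).neg using 1
  simp only [Pi.inv_apply]
  field_simp
  ring

lemma tendsto_log_mul_inv_atTop : Tendsto (fun t : ℝ => log t * t⁻¹) atTop (𝓝 0) :=
  (isLittleO_log_id_atTop.tendsto_div_nhds_zero).congr fun t => by simp [div_eq_mul_inv]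

lemma tendsto_log_primitive :
    Tendsto (fun r : ℝ => -((log (1 + r ^ 2) + 1) * (1 + r ^ 2)⁻¹)) atTop (𝓝 0) := by
  have h := ((tendsto_log_mul_inv_atTop.add tendsto_inv_atTop_zero).comp
    tendsto_one_add_sq_atTop).neg
  simp only [add_zero, neg_zero] at h
  refine h.congr fun r => ?_
  simp only [Function.comp]
  ring

lemma mass_weight_nonneg {r : ℝ} (hr : 0 ≤ r) : 0 ≤ 2 * r / (1 + r ^ 2) ^ 2 := by positivity

lemma log_one_add_sq_nonneg (r : ℝ) : 0 ≤ log (1 + r ^ 2) :=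
  log_nonneg (by nlinarith [sq_nonneg r])

lemma integrableOn_mass : IntegrableOn (fun r : ℝ => 2 * r / (1 + r ^ 2) ^ 2 * 1) (Ioi 0) :=
  integrableOn_Ioi_deriv_of_nonneg' (fun r _ => hasDerivAt_mass_primitive r)
    (fun _ hr => mul_nonneg (mass_weight_nonneg (le_of_lt hr)) zero_le_one) tendsto_mass_primitive

lemma integral_mass : ∫ r in Ioi (0 : ℝ), 2 * r / (1 + r ^ 2) ^ 2 * 1 = 1 := by
  rw [integral_Ioi_of_hasDerivAt_of_nonneg' (fun r _ => hasDerivAt_mass_primitive r)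
    (fun _ hr => mul_nonneg (mass_weight_nonneg (le_of_lt hr)) zero_le_one) tendsto_mass_primitive]
  norm_num

lemma integrableOn_log_mass :
    IntegrableOn (fun r : ℝ => 2 * r / (1 + r ^ 2) ^ 2 * log (1 + r ^ 2)) (Ioi 0) :=
  integrableOn_Ioi_deriv_of_nonneg' (fun r _ => hasDerivAt_log_primitive r)
    (fun r hr => mul_nonneg (mass_weight_nonneg (le_of_lt hr)) (log_one_add_sq_nonneg r))
    tendsto_log_primitive

lemma integral_log_mass :
    ∫ r in Ioi (0 : ℝ), 2 * r / (1 + r ^ 2) ^ 2 * log (1 + r ^ 2) = 1 := by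
  rw [integral_Ioi_of_hasDerivAt_of_nonneg' (fun r _ => hasDerivAt_log_primitive r)
    (fun r hr => mul_nonneg (mass_weight_nonneg (le_of_lt hr)) (log_one_add_sq_nonneg r))
    tendsto_log_primitive]
  norm_num

lemma hasDerivAt_log_div_primitive {a r : ℝ} (hr : 0 < r) :
    HasDerivAt (fun r : ℝ => -((log r - log a) * (1 + r ^ 2)⁻¹) + (log r - log (1 + r ^ 2) / 2))
      (2 * r / (1 + r ^ 2) ^ 2 * (log r - log a)) r := by
  have h : 1 + r ^ 2 ≠ 0 := by positivity
  have h1 := hasDerivAt_one_add_sq r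
  have h2 := hasDerivAt_log hr.ne'
  convert! (((h2.sub_const (log a)).mul (h1.inv h)).neg).add
    (h2.sub ((h1.log h).div_const 2)) using 1
  simp only [Pi.inv_apply]
  field_simp
  ring

lemma tendsto_log_div_primitive (a : ℝ) :
    Tendsto (fun r : ℝ => -((log r - log a) * (1 + r ^ 2)⁻¹) + (log r - log (1 + r ^ 2) / 2))
      atTop (𝓝 0) := by
  have hinv := tendsto_inv_atTop_zero.comp tendsto_one_add_sq_atTop
  have hquot : Tendsto (fun r : ℝ => log r - log (1 + r ^ 2) / 2) atTop (𝓝 0) := by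
    have h1 : Tendsto (fun r : ℝ => 1 + (r ^ 2)⁻¹) atTop (𝓝 1) := by
      simpa using (tendsto_inv_atTop_zero.comp
        (tendsto_pow_atTop (α := ℝ) two_ne_zero)).const_add 1
    have h2 := ((continuousAt_log one_ne_zero).tendsto.comp h1).div_const (-2)
    simp only [log_one, zero_div] at h2
    refine h2.congr' ?_
    filter_upwards [eventually_gt_atTop 0] with r hr
    have : 1 + (r ^ 2)⁻¹ = (1 + r ^ 2) / r ^ 2 := by field_simp; ring
    simp only [Function.comp]
    rw [this, log_div (by positivity) (by positivity), log_pow]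
    push_cast
    ring
  have hlog : Tendsto (fun r : ℝ => log r * (1 + r ^ 2)⁻¹) atTop (𝓝 0) := by
    have h := (hquot.mul hinv).add
      (((tendsto_log_mul_inv_atTop).comp tendsto_one_add_sq_atTop).div_const 2)
    simp only [mul_zero, zero_div, add_zero] at h
    refine h.congr fun r => ?_
    simp only [Function.comp]
    ring
  have h := ((hlog.sub (hinv.const_mul (log a))).neg).add hquot
  simp only [mul_zero, sub_zero, neg_zero, add_zero] at h
  refine h.congr fun r => ?_
  simp only [Function.comp]
  ring

/-- The logarithmic potential of `μ` as a one-dimensional integral. -/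
lemma integral_mass_mul_log_max {a : ℝ} (ha : 0 < a) :
    ∫ r in Ioi (0 : ℝ), 2 * r / (1 + r ^ 2) ^ 2 * (log r + log⁺ (a / r)) =
      log (1 + a ^ 2) / 2 := by
  have hpos : ∀ r ∈ Ioi a, 0 ≤ 2 * r / (1 + r ^ 2) ^ 2 * (log r - log a) := fun r hr =>
    mul_nonneg (mass_weight_nonneg (ha.trans hr).le) (sub_nonneg.2 (log_le_log ha (le_of_lt hr)))
  have hd : ∀ r ∈ Ici a, HasDerivAt _ (2 * r / (1 + r ^ 2) ^ 2 * (log r - log a)) r :=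
    fun r hr => hasDerivAt_log_div_primitive (ha.trans_le hr)
  have hint := integrableOn_Ioi_deriv_of_nonneg' hd hpos (tendsto_log_div_primitive a)
  have hval := integral_Ioi_of_hasDerivAt_of_nonneg' hd hpos (tendsto_log_div_primitive a)
  have hsplit : ∀ r ∈ Ioi (0 : ℝ), 2 * r / (1 + r ^ 2) ^ 2 * (log r + log⁺ (a / r)) =
      log a * (2 * r / (1 + r ^ 2) ^ 2 * 1) +
        (Ioi a).indicator (fun r => 2 * r / (1 + r ^ 2) ^ 2 * (log r - log a)) r := by
    intro r (hr : 0 < r)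
    rw [posLog_apply, log_div ha.ne' hr.ne']
    by_cases h : a < r
    · rw [indicator_of_mem (mem_Ioi.2 h), max_eq_left (sub_nonpos.2 (log_le_log ha h.le))]
      ring
    · rw [indicator_of_notMem (by simpa using h),
        max_eq_right (sub_nonneg.2 (log_le_log hr (not_lt.1 h)))]
      ring
  rw [setIntegral_congr_fun measurableSet_Ioi hsplit, integral_add
    (integrableOn_mass.const_mul _)
    (((integrable_indicator_iff measurableSet_Ioi).2 hint).integrableOn),
    integral_const_mul, integral_mass, setIntegral_indicator measurableSet_Ioi,
    inter_eq_self_of_subset_right (Ioi_subset_Ioi ha.le), hval]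
  ring

end RadialIntegrals

section Density

open Set

lemma measurable_mu2 : Measurable mu2 := by
  unfold mu2
  fun_prop

lemma mu2_nonneg (x : E2) : 0 ≤ mu2 x := by
  unfold mu2
  positivity

lemma mu2_le_one (x : E2) : mu2 x ≤ 1 := by
  unfold mu2
  rw [div_le_one (by positivity)]
  exact one_le_mul_of_one_le_of_one_le (by linarith [pi_gt_three])
    (one_le_pow₀ (by nlinarith [sq_nonneg ‖x‖]))

lemma integrable_mu2 : Integrable mu2 := by
  simpa using integrable_mu2_mul_radial integrableOn_mass

lemma integral_mu2 : ∫ x, mu2 x = 1 := by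
  have := integral_mu2_mul_radial (fun _ => 1)
  rw [integral_mass] at this
  simpa using this

lemma integrable_mu2_mul_log : Integrable (fun x : E2 => mu2 x * log (1 + ‖x‖ ^ 2)) :=
  integrable_mu2_mul_radial integrableOn_log_mass

lemma integral_mu2_mul_log : ∫ x : E2, mu2 x * log (1 + ‖x‖ ^ 2) = 1 :=
  (integral_mu2_mul_radial fun r => log (1 + r ^ 2)).trans integral_log_mass

lemma log_mu2 (x : E2) : log (mu2 x) = -(2 * log (1 + ‖x‖ ^ 2) + log π) := by
  unfold mu2
  rw [one_div, log_inv, log_mul (by positivity) (by positivity), log_pow]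
  push_cast
  ring

lemma integral_mu2_mul_log_mu2 : ∫ x : E2, mu2 x * log (mu2 x) = -2 - log π := by
  have h : (fun x : E2 => mu2 x * log (mu2 x)) =
      fun x => (-2) * (mu2 x * log (1 + ‖x‖ ^ 2)) - log π * mu2 x := by
    ext x
    rw [log_mu2]
    ring
  rw [h, integral_sub (integrable_mu2_mul_log.const_mul _) (integrable_mu2.const_mul _),
    integral_const_mul, integral_const_mul, integral_mu2_mul_log, integral_mu2]
  ring

/-- The negative part of the logarithmic kernel is integrable on the plane. -/
lemma integrable_posLog_inv_norm : Integrable (fun x : E2 => log⁺ (‖x‖⁻¹)) := by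
  rw [integrable_radial_E2_iff (fun r => log⁺ r⁻¹)]
  have h : IntegrableOn (fun r : ℝ => -(r * log r)) (Ioc 0 1) :=
    ((continuous_mul_log.neg.integrableOn_Icc).mono_set Ioc_subset_Icc_self)
  refine (((integrable_indicator_iff measurableSet_Ioc).2 h).integrableOn).congr_fun ?_
    measurableSet_Ioi
  intro r (hr : 0 < r)
  by_cases h1 : r ≤ 1
  · rw [indicator_of_mem (by exact ⟨hr, h1⟩)]
    simp only [posLog_apply, log_inv]
    rw [max_eq_right (neg_nonneg.2 (log_nonpos hr.le h1))]
    ring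
  · rw [indicator_of_notMem (fun h => h1 h.2)]
    simp only [posLog_apply, log_inv]
    rw [max_eq_left (neg_nonpos.2 (log_nonneg (not_le.1 h1).le))]
    ring

lemma abs_log_eq_posLog_add (t : ℝ) : |log t| = log⁺ t + log⁺ t⁻¹ := by
  linarith [half_mul_log_add_log_abs (x := t), posLog_sub_posLog_inv (x := t)]

lemma posLog_norm_le (x : E2) : log⁺ ‖x‖ ≤ log (1 + ‖x‖ ^ 2) := by
  rw [posLog_eq_log_max_one (norm_nonneg x)]
  refine log_le_log (by positivity) (max_le (by nlinarith [sq_nonneg ‖x‖]) ?_)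
  nlinarith [sq_nonneg (‖x‖ - 1), norm_nonneg x]

lemma integrable_mu2_mul_mu2_mul_log :
    Integrable (fun p : E2 × E2 => mu2 p.1 * mu2 p.2 * log ‖p.1 - p.2‖) := by
  have h1 : Integrable (fun p : E2 × E2 => mu2 p.1 * mu2 p.2) :=
    integrable_mu2.mul_prod integrable_mu2
  have h2 : Integrable (fun p : E2 × E2 => mu2 p.1 * log (1 + ‖p.1‖ ^ 2) * mu2 p.2) :=
    integrable_mu2_mul_log.mul_prod integrable_mu2
  have h3 : Integrable (fun p : E2 × E2 => mu2 p.1 * (mu2 p.2 * log (1 + ‖p.2‖ ^ 2))) :=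
    integrable_mu2.mul_prod integrable_mu2_mul_log
  have h4 : Integrable (fun p : E2 × E2 => mu2 p.2 * log⁺ (‖p.1 - p.2‖⁻¹)) :=
    integrable_mu2.convolution_integrand (ContinuousLinearMap.mul ℝ ℝ) integrable_posLog_inv_norm
  have hm := measurable_mu2
  refine (((h1.const_mul (log 2)).add (h2.add h3)).add h4).mono'
    (by fun_prop) (Eventually.of_forall fun p => ?_)
  have hx := mu2_nonneg p.1
  have hy := mu2_nonneg p.2
  rw [norm_eq_abs, abs_mul, abs_of_nonneg (mul_nonneg hx hy), abs_log_eq_posLog_add]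
  have hpos : log⁺ ‖p.1 - p.2‖ ≤ log (1 + ‖p.1‖ ^ 2) + log (1 + ‖p.2‖ ^ 2) + log 2 := by
    have := posLog_norm_add_le p.1 (-p.2)
    rw [norm_neg, ← sub_eq_add_neg] at this
    linarith [posLog_norm_le p.1, posLog_norm_le p.2]
  have hA := mul_le_mul_of_nonneg_left hpos (mul_nonneg hx hy)
  have hB : mu2 p.1 * (mu2 p.2 * log⁺ (‖p.1 - p.2‖⁻¹)) ≤ mu2 p.2 * log⁺ (‖p.1 - p.2‖⁻¹) :=
    mul_le_of_le_one_left (mul_nonneg hy posLog_nonneg) (mu2_le_one _)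
  simp only [Pi.add_apply]
  linarith

end Density

section Potential

open Set

/-- Averaging `log ‖a - ·‖` over the circle through `y`. -/
lemma integral_log_norm_sub_circle (a : ℂ) {y : ℂ} (hy : y ≠ 0) :
    ∫ θ in 0..2 * π, log ‖a - circleMap 0 1 θ * y‖ =
      2 * π * (log ‖y‖ + log⁺ (‖a‖ / ‖y‖)) := by
  have havg := circleAverage_log_norm_sub_const_eq_posLog (a := a / y)
  have hci := circleIntegrable_log_norm_sub_const (a := a / y) (c := 0) 1
  rw [circleAverage_def, smul_eq_mul, inv_mul_eq_iff_eq_mul₀ (by positivity), norm_div] at havg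
  have hne : ∀ᵐ θ : ℝ, circleMap 0 1 θ ≠ a / y :=
    ((countable_singleton (a / y)).preimage_circleMap 0 one_ne_zero).ae_notMem volume
  have hcongr : ∫ θ in 0..2 * π, log ‖a - circleMap 0 1 θ * y‖ =
      ∫ θ in 0..2 * π, (log ‖y‖ + log ‖circleMap 0 1 θ - a / y‖) := by
    refine intervalIntegral.integral_congr_ae ?_
    filter_upwards [hne] with θ hθ _
    rw [← log_mul (norm_ne_zero_iff.2 hy) (norm_ne_zero_iff.2 (sub_ne_zero.2 hθ)), ← norm_mul,
      mul_sub, mul_div_cancel₀ _ hy, norm_sub_rev, mul_comm y]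
  rw [hcongr, intervalIntegral.integral_add (by simp) hci, havg]
  simp
  ring

/-- A radial weight sees the logarithmic kernel only through its circle averages. -/
lemma integral_radial_mul_log_norm_sub {w : ℝ → ℝ} (hw : Measurable w) (a : ℂ)
    (hint : Integrable (fun y : ℂ => w ‖y‖ * log ‖a - y‖)) :
    ∫ y : ℂ, w ‖y‖ * log ‖a - y‖ = ∫ y : ℂ, w ‖y‖ * (log ‖y‖ + log⁺ (‖a‖ / ‖y‖)) := by
  set G : ℂ → ℝ := fun y => w ‖y‖ * log ‖a - y‖ with hG
  have hrot : ∀ θ : ℝ, ∃ e : ℂ ≃ₗᵢ[ℝ] ℂ, ∀ y, e y = circleMap 0 1 θ * y := fun θ =>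
    ⟨rotation (Circle.exp θ), fun y => by simp [circleMap, rotation_apply]⟩
  have hGm : Measurable G := by fun_prop
  have hcm : Measurable (circleMap 0 1) := (continuous_circleMap 0 1).measurable
  have hprod : Integrable (Function.uncurry fun (θ : ℝ) (y : ℂ) => G (circleMap 0 1 θ * y))
      ((volume.restrict (Ioc 0 (2 * π))).prod volume) := by
    rw [integrable_prod_iff (by
      refine Measurable.aestronglyMeasurable ?_
      simp only [Function.uncurry_def]
      fun_prop)]
    simp only [Function.uncurry_apply_pair]
    constructor
    · refine Eventually.of_forall fun θ => ?_
      obtain ⟨e, he⟩ := hrot θ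
      simp only [← he]
      exact e.measurePreserving.integrable_comp_of_integrable hint
    · have : ∀ θ : ℝ, ∫ y, ‖G (circleMap 0 1 θ * y)‖ = ∫ y, ‖G y‖ := fun θ => by
        obtain ⟨e, he⟩ := hrot θ
        simp only [← he]
        exact e.measurePreserving.integral_comp e.toMeasurableEquiv.measurableEmbedding
          (fun y => ‖G y‖)
      simp only [this]
      exact integrable_const _
  have hswap := integral_integral_swap hprod
  have hleft : ∀ θ : ℝ, ∫ y, G (circleMap 0 1 θ * y) = ∫ y, G y := fun θ => by
    obtain ⟨e, he⟩ := hrot θ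
    simp only [← he]
    exact e.measurePreserving.integral_comp e.toMeasurableEquiv.measurableEmbedding G
  have hright : (fun y => ∫ θ in Ioc 0 (2 * π), G (circleMap 0 1 θ * y)) =ᵐ[volume]
      fun y => 2 * π * (w ‖y‖ * (log ‖y‖ + log⁺ (‖a‖ / ‖y‖))) := by
    filter_upwards [Measure.ae_ne volume (0 : ℂ)] with y hy
    rw [← intervalIntegral.integral_of_le (by positivity)]
    simp only [hG, norm_mul, norm_circleMap_zero, abs_one, one_mul]
    rw [intervalIntegral.integral_const_mul, integral_log_norm_sub_circle a hy]
    ring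
  rw [integral_congr_ae hright, integral_const_mul] at hswap
  simp only [hleft] at hswap
  simpa [pi_ne_zero, pi_nonneg] using hswap

/-- The logarithmic potential of `μ`. -/
lemma integral_mu2_mul_log_norm_sub {x : E2} (hx : x ≠ 0)
    (hint : Integrable (fun y : E2 => mu2 y * log ‖x - y‖)) :
    ∫ y : E2, mu2 y * log ‖x - y‖ = log (1 + ‖x‖ ^ 2) / 2 := by
  let e : ℂ ≃ₗᵢ[ℝ] E2 := Complex.orthonormalBasisOneI.repr
  have he := e.measurePreserving
  have hemb := e.toMeasurableEquiv.measurableEmbedding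
  set w : ℝ → ℝ := fun r => 1 / (π * (1 + r ^ 2) ^ 2) with hw
  have hkernel : ∀ y : ℂ, mu2 (e y) * log ‖x - e y‖ = w ‖y‖ * log ‖e.symm x - y‖ := fun y => by
    rw [← e.norm_map (e.symm x - y), map_sub, e.apply_symm_apply]
    simp [mu2, hw]
  have hint' : Integrable (fun y : ℂ => w ‖y‖ * log ‖e.symm x - y‖) := by
    simp only [← hkernel]
    exact he.integrable_comp_of_integrable hint
  calc ∫ y : E2, mu2 y * log ‖x - y‖
      = ∫ y : ℂ, mu2 (e y) * log ‖x - e y‖ :=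
        (he.integral_comp hemb fun y => mu2 y * log ‖x - y‖).symm
    _ = ∫ y : ℂ, w ‖y‖ * (log ‖y‖ + log⁺ (‖x‖ / ‖y‖)) := by
        simp only [hkernel]
        rw [integral_radial_mul_log_norm_sub (by fun_prop) _ hint', e.symm.norm_map]
    _ = ∫ y : E2, mu2 y * (log ‖y‖ + log⁺ (‖x‖ / ‖y‖)) := by
        rw [← he.integral_comp hemb]
        simp [mu2, hw]
    _ = log (1 + ‖x‖ ^ 2) / 2 := by
        rw [integral_mu2_mul_radial fun r => log r + log⁺ (‖x‖ / r),
          integral_mass_mul_log_max (norm_pos_iff.2 hx)]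

lemma integral_mu2_mul_mu2_mul_log :
    ∫ p : E2 × E2, mu2 p.1 * mu2 p.2 * log ‖p.1 - p.2‖ = 1 / 2 := by
  have hint := integrable_mu2_mul_mu2_mul_log
  rw [Measure.volume_eq_prod] at hint ⊢
  rw [integral_prod _ hint]
  have hpot : (fun x : E2 => ∫ y : E2, mu2 x * mu2 y * log ‖x - y‖) =ᵐ[volume]
      fun x => mu2 x * log (1 + ‖x‖ ^ 2) / 2 := by
    filter_upwards [hint.prod_right_ae, Measure.ae_ne volume (0 : E2)] with x hx hx0
    have hpos : mu2 x ≠ 0 := by unfold mu2; positivity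
    simp only [mul_assoc] at hx ⊢
    rw [integrable_const_mul_iff (IsUnit.mk0 _ hpos)] at hx
    rw [integral_const_mul, integral_mu2_mul_log_norm_sub hx0 hx]
    ring
  rw [integral_congr_ae hpot, integral_div, integral_mu2_mul_log]

end Potential

/-- Explicit values of the entropy and the logarithmic interaction of μ, and the
equality case of the logarithmic Hardy–Littlewood–Sobolev inequality. -/
theorem mu_equality_case :
    (∫ x : E2, mu2 x * Real.log (mu2 x)) = -2 - Real.log π ∧
    (∫ p : E2 × E2, mu2 p.1 * mu2 p.2 * Real.log ‖p.1 - p.2‖) = 1 / 2 ∧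
    (∫ x : E2, mu2 x * Real.log (mu2 x))
        + 2 * (∫ p : E2 × E2, mu2 p.1 * mu2 p.2 * Real.log ‖p.1 - p.2‖)
        + 1 + Real.log π = 0 := by
  refine ⟨integral_mu2_mul_log_mu2, integral_mu2_mul_mu2_mul_log, ?_⟩
  rw [integral_mu2_mul_log_mu2, integral_mu2_mul_mu2_mul_log]
  ring
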